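/- The toric code associated to the Hirzebruch polytope with vertices (0,0),(d,0),(d,e+rd),(0,e), under d < q−1, e < q−1, e+rd < q−1, has length (q−1)², dimension (d+1)(e+1)+r·d(d+1)/2, and minimum distance exactly min{(q−1−d)(q−1−e), (q−1)(q−1−e−rd)}. -/

import Mathlib

open MvPolynomial

/-- Evaluation of a two-variable polynomial at all points of the torus `(Fˣ)²`. -/
noncomputable def torusEval (F : Type*) [Field F] :
    MvPolynomial (Fin 2) F →ₗ[F] (Fˣ × Fˣ → F) :=
  LinearMap.pi fun t : Fˣ × Fˣ =>
    (MvPolynomial.aeval fun i : Fin 2 => if i = 0 then (t.1 : F) else (t.2 : F)).toLinearMap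

/-- The lattice points of the Hirzebruch polytope with vertices
`(0,0), (d,0), (d,e+rd), (0,e)`. -/
def hirzU (d e r : ℕ) : Set (ℕ × ℕ) :=
  {u : ℕ × ℕ | ((u.1 : ℝ), (u.2 : ℝ)) ∈
    convexHull ℝ {((0 : ℝ), (0 : ℝ)), ((d : ℝ), 0), ((d : ℝ), (e : ℝ) + r * d),
      (0, (e : ℝ))}}

/-- The toric code associated to the lattice points `U`. -/
noncomputable def toricCode (F : Type*) [Field F] (U : Set (ℕ × ℕ)) :
    Submodule F (Fˣ × Fˣ → F) :=
  Submodule.map (torusEval F)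
    (Submodule.span F {m : MvPolynomial (Fin 2) F | ∃ u ∈ U, m = X 0 ^ u.1 * X 1 ^ u.2})

/-!
Write `N = q - 1` and, more generally, let `U` be the lattice points under the graph of a monotone
height function `h` on `{0, …, d}`. The monomials with exponents in `U` are pairwise distinct
characters of the torus, so Dedekind's lemma gives the dimension. For the minimum distance, write a
codeword as the evaluation of `f = ∑ⱼ fⱼ(x) yʲ` and let `l` be the number of vertical lines
`x = const` on which `f` vanishes. If `j > h (d - l)`, then `fⱼ` is divisible by `x ^ (d - l + 1)`,
has degree at most `d` and has `l` nonzero roots, hence `fⱼ = 0`. So on each of the other `N - l`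
lines `f` restricts to a nonzero polynomial of degree at most `h (d - l)`, and the weight is at
least `(N - l) * (N - h (d - l))`. Products of linear factors and a power of `x` attain each of
these values. For the affine height `h i = e + r * i` the value is concave in `l`, so it is
minimal at `l = 0` or `l = d`.
-/

open scoped Polynomial Polynomial.Bivariate

section LatticePoints

/-- The lattice points `(i, j)` with `i ≤ d` and `j ≤ h i`, that is, the exponents of a toric code
whose polygon lies under the graph of the height function `h`. -/
def underGraph (d : ℕ) (h : ℕ → ℕ) : Finset (ℕ × ℕ) :=
  ((Finset.range (d + 1)).sigma fun i => Finset.range (h i + 1)).map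
    (Equiv.sigmaEquivProd ℕ ℕ).toEmbedding

lemma mem_underGraph {d : ℕ} {h : ℕ → ℕ} {u : ℕ × ℕ} :
    u ∈ underGraph d h ↔ u.1 ≤ d ∧ u.2 ≤ h u.1 := by
  simp [underGraph, Finset.mem_map_equiv]

lemma card_underGraph (d : ℕ) (h : ℕ → ℕ) :
    (underGraph d h).card = ∑ i ∈ Finset.range (d + 1), (h i + 1) := by
  simp [underGraph]

lemma card_underGraph_affine (d e r : ℕ) :
    (underGraph d fun i => e + r * i).card = (d + 1) * (e + 1) + r * (d * (d + 1)) / 2 := by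
  have gauss_sum : ∑ i ∈ Finset.range (d + 1), i = d * (d + 1) / 2 := by
    rw [Finset.sum_range_id, Nat.add_sub_cancel, mul_comm]
  have even_mul : 2 ∣ d * (d + 1) := (Nat.even_mul_succ_self d).two_dvd
  calc (underGraph d fun i => e + r * i).card
      = ∑ i ∈ Finset.range (d + 1), ((e + 1) + r * i) := by
        rw [card_underGraph]; exact Finset.sum_congr rfl fun i _ => by ring
    _ = (d + 1) * (e + 1) + r * ∑ i ∈ Finset.range (d + 1), i := by
        simp [Finset.sum_add_distrib, Finset.mul_sum]
    _ = (d + 1) * (e + 1) + r * (d * (d + 1)) / 2 := by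
        rw [gauss_sum, Nat.mul_div_assoc r even_mul]

lemma convexHull_trapezoid {d e r : ℝ} (hd : 0 ≤ d) (he : 0 ≤ e) (herd : 0 ≤ e + r * d) :
    convexHull ℝ {((0 : ℝ), (0 : ℝ)), (d, 0), (d, e + r * d), (0, e)} =
      {p : ℝ × ℝ | p.1 ∈ Set.Icc 0 d ∧ p.2 ∈ Set.Icc 0 (e + r * p.1)} := by
  refine (convexHull_min ?_ ?_).antisymm ?_
  · rintro p (rfl | rfl | rfl | rfl) <;> simp [hd, he, herd]
  · rintro p ⟨⟨hp0, hpd⟩, hp0', hpr⟩ q ⟨⟨hq0, hqd⟩, hq0', hqr⟩ a b ha hb hab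
    obtain rfl : b = 1 - a := by linarith
    refine ⟨⟨?_, ?_⟩, ?_, ?_⟩ <;>
      simp only [Prod.fst_add, Prod.snd_add, Prod.smul_fst, Prod.smul_snd, smul_eq_mul] <;>
      nlinarith
  · rintro ⟨x, y⟩ ⟨hx, hy⟩
    set V : Set (ℝ × ℝ) := {(0, 0), (d, 0), (d, e + r * d), (0, e)} with hV
    have convex_hull : Convex ℝ (convexHull ℝ V) := convex_convexHull ℝ V
    have vertex_mem {v : ℝ × ℝ} (hv : v ∈ V) : v ∈ convexHull ℝ V := subset_convexHull ℝ V hv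
    obtain ⟨a, b, ha, hb, hab, rfl⟩ : x ∈ segment ℝ 0 d := by rwa [segment_eq_Icc hd]
    obtain ⟨s, t, hs, ht, hst, rfl⟩ : y ∈ segment ℝ 0 (e + r * (a • 0 + b • d)) := by
      rwa [segment_eq_Icc (hy.1.trans hy.2)]
    have bottom_mem := convex_hull (vertex_mem (v := (0, 0)) (by simp [hV]))
      (vertex_mem (v := (d, 0)) (by simp [hV])) ha hb hab
    have top_mem := convex_hull (vertex_mem (v := (0, e)) (by simp [hV]))
      (vertex_mem (v := (d, e + r * d)) (by simp [hV])) ha hb hab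
    convert convex_hull bottom_mem top_mem hs ht hst using 1
    obtain rfl : a = 1 - b := by linarith
    obtain rfl : s = 1 - t := by linarith
    ext <;> simp only [Prod.fst_add, Prod.snd_add, Prod.smul_fst, Prod.smul_snd, smul_eq_mul] <;>
      ring

lemma hirzU_eq_underGraph (d e r : ℕ) : hirzU d e r = underGraph d fun i => e + r * i := by
  ext ⟨i, j⟩
  rw [hirzU, Set.mem_ofPred_eq, convexHull_trapezoid (by positivity) (by positivity)
    (by positivity), Finset.mem_coe, mem_underGraph]
  simp only [Set.mem_ofPred_eq, Set.mem_Icc, Nat.cast_nonneg, true_and]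
  norm_cast

end LatticePoints

section HammingNorm

variable {ι κ R : Type*} [Fintype ι] [Fintype κ] [DecidableEq R]

lemma hammingNorm_prod [Zero R] (w : ι × κ → R) :
    hammingNorm w = ∑ x, hammingNorm fun y => w (x, y) := by
  simp only [hammingNorm, Finset.card_filter, Fintype.sum_prod_type]

lemma hammingNorm_mul_prod [MulZeroClass R] [NoZeroDivisors R] (v : ι → R) (w : κ → R) :
    hammingNorm (fun t : ι × κ => v t.1 * w t.2) = hammingNorm v * hammingNorm w := by
  simp only [hammingNorm, mul_ne_zero_iff]
  rw [← Finset.card_product, ← Finset.filter_product (v · ≠ 0) (w · ≠ 0),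
    Finset.univ_product_univ]

end HammingNorm

section UnivariateEvaluation

variable {R : Type*} [CommRing R] [IsDomain R]

lemma eq_zero_of_X_pow_dvd_of_eval_units_eq_zero {p : R[X]} {k : ℕ}
    (hk : Polynomial.X ^ k ∣ p) {S : Finset Rˣ} (hS : ∀ x ∈ S, p.eval (x : R) = 0)
    (hdeg : p.natDegree < k + S.card) : p = 0 := by
  obtain ⟨q, rfl⟩ := hk
  by_contra hp
  have hq : q ≠ 0 := right_ne_zero_of_mul hp
  have q_roots (x : S) : q.eval ((x : Rˣ) : R) = 0 := by
    simpa using hS x x.2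
  rw [Polynomial.natDegree_X_pow_mul k hq, add_comm, add_lt_add_iff_left] at hdeg
  exact hq (Polynomial.eq_zero_of_natDegree_lt_card_of_eval_eq_zero q
    (Units.val_injective.comp Subtype.val_injective) q_roots (by simpa using hdeg))

variable [Fintype Rˣ] [DecidableEq R]

lemma card_units_sub_natDegree_le_hammingNorm_eval {p : R[X]} (hp : p ≠ 0) :
    Fintype.card Rˣ - p.natDegree ≤ hammingNorm fun x : Rˣ => p.eval (x : R) := by
  have card_roots_le :
      (Finset.univ.filter fun x : Rˣ => p.eval (x : R) = 0).card ≤ p.natDegree := by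
    by_contra! hlt
    exact hp (eq_zero_of_X_pow_dvd_of_eval_units_eq_zero (k := 0) (by simp)
      (fun x hx => (Finset.mem_filter.1 hx).2) (by simpa using hlt))
  have card_split := Finset.card_filter_add_card_filter_not (s := (Finset.univ : Finset Rˣ))
    fun x => p.eval (x : R) = 0
  rw [Finset.card_univ] at card_split
  simp only [hammingNorm, ne_eq]
  omega

lemma exists_natDegree_eq_hammingNorm_eval_eq {n : ℕ} (hn : n ≤ Fintype.card Rˣ) :
    ∃ p : R[X], p.natDegree = n ∧
      hammingNorm (fun x : Rˣ => p.eval (x : R)) = Fintype.card Rˣ - n := by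
  obtain ⟨A, -, rfl⟩ := Finset.exists_subset_card_eq (s := (Finset.univ : Finset Rˣ)) hn
  refine ⟨Lagrange.nodal A Units.val, Lagrange.natDegree_nodal, ?_⟩
  rw [hammingNorm, ← Finset.card_compl]
  congr 1
  ext x
  simp [Lagrange.eval_nodal, Finset.prod_eq_zero_iff, sub_eq_zero, Units.val_inj]

end UnivariateEvaluation

section BivariateEvaluation

/-- The exponents `(i, j)` of the monomials `x ^ i * y ^ j` of `f` all lie in `U`. Here `x` is the
inner and `y` the outer variable of `R[X][Y]`. -/
def SupportedIn {R : Type*} [Semiring R] (f : R[X][Y]) (U : Set (ℕ × ℕ)) : Prop :=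
  ∀ i j, (f.coeff j).coeff i ≠ 0 → (i, j) ∈ U

namespace SupportedIn

variable {R : Type*} [Semiring R] {f g : R[X][Y]} {U : Set (ℕ × ℕ)}

lemma zero (U : Set (ℕ × ℕ)) : SupportedIn (0 : R[X][Y]) U := fun i j hij => by simp at hij

lemma monomial {u : ℕ × ℕ} (hu : u ∈ U) (a : R) :
    SupportedIn (Polynomial.monomial u.2 (Polynomial.monomial u.1 a)) U := fun i j hij => by
  obtain rfl : u.2 = j := by
    by_contra hne
    simp [Polynomial.coeff_monomial, hne] at hij
  obtain rfl : u.1 = i := by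
    by_contra hne
    simp [Polynomial.coeff_monomial, hne] at hij
  exact hu

lemma add (hf : SupportedIn f U) (hg : SupportedIn g U) : SupportedIn (f + g) U :=
  fun i j hij => by
    rw [Polynomial.coeff_add, Polynomial.coeff_add] at hij
    by_cases hfij : (f.coeff j).coeff i = 0
    · exact hg i j (by simpa [hfij] using hij)
    · exact hf i j hfij

lemma smul (a : R) (hf : SupportedIn f U) : SupportedIn (a • f) U := fun i j hij =>
  hf i j (right_ne_zero_of_mul (by simpa using hij))

lemma natDegree_coeff_le {d : ℕ} {h : ℕ → ℕ} (hf : SupportedIn f (underGraph d h)) (j : ℕ) :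
    (f.coeff j).natDegree ≤ d :=
  Polynomial.natDegree_le_iff_coeff_eq_zero.2 fun i hi => by
    by_contra hne
    exact hi.not_ge (mem_underGraph.1 (hf i j hne)).1

end SupportedIn

variable {R : Type*} [CommRing R] [Fintype Rˣ]

open Classical in
/-- The nonzero abscissae of the vertical lines `x = const` on which `f` vanishes identically. -/
noncomputable def verticalZeros (f : R[X][Y]) : Finset Rˣ :=
  {x | f.map (Polynomial.evalRingHom (x : R)) = 0}

lemma mem_verticalZeros {f : R[X][Y]} {x : Rˣ} :
    x ∈ verticalZeros f ↔ f.map (Polynomial.evalRingHom (x : R)) = 0 := by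
  simp [verticalZeros]

lemma eval_coeff_eq_zero_of_mem_verticalZeros {f : R[X][Y]} {x : Rˣ} (hx : x ∈ verticalZeros f)
    (j : ℕ) : (f.coeff j).eval (x : R) = 0 := by
  simpa using congrArg (Polynomial.coeff · j) (mem_verticalZeros.1 hx)

variable [IsDomain R]

lemma card_verticalZeros_le {f : R[X][Y]} (hf : f ≠ 0) {d : ℕ}
    (hd : ∀ j, (f.coeff j).natDegree ≤ d) : (verticalZeros f).card ≤ d := by
  by_contra! hlt
  refine hf (Polynomial.ext fun j => ?_)
  exact eq_zero_of_X_pow_dvd_of_eval_units_eq_zero (k := 0) (by simp)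
    (fun x hx => eval_coeff_eq_zero_of_mem_verticalZeros hx j)
    (by simpa using (hd j).trans_lt hlt)

lemma SupportedIn.natDegree_le {f : R[X][Y]} {d : ℕ} {h : ℕ → ℕ} (hh : Monotone h)
    (hf : SupportedIn f (underGraph d h)) : f.natDegree ≤ h (d - (verticalZeros f).card) := by
  refine Polynomial.natDegree_le_iff_coeff_eq_zero.2 fun j hj => ?_
  have X_pow_dvd : Polynomial.X ^ (d - (verticalZeros f).card + 1) ∣ f.coeff j := by
    refine Polynomial.X_pow_dvd_iff.2 fun i hi => ?_
    by_contra hne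
    exact hj.not_ge ((mem_underGraph.1 (hf i j hne)).2.trans (hh (Nat.lt_succ_iff.1 hi)))
  refine eq_zero_of_X_pow_dvd_of_eval_units_eq_zero X_pow_dvd
    (fun x hx => eval_coeff_eq_zero_of_mem_verticalZeros hx j) ?_
  have := hf.natDegree_coeff_le j
  omega

lemma mul_le_hammingNorm_evalEval [DecidableEq R] (f : R[X][Y]) :
    (Fintype.card Rˣ - (verticalZeros f).card) * (Fintype.card Rˣ - f.natDegree) ≤
      hammingNorm fun t : Rˣ × Rˣ => f.evalEval (t.1 : R) (t.2 : R) := by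
  have line_weight (x : Rˣ) (hx : x ∈ (verticalZeros f)ᶜ) : Fintype.card Rˣ - f.natDegree ≤
      hammingNorm fun y : Rˣ => f.evalEval (x : R) (y : R) := by
    rw [Finset.mem_compl, mem_verticalZeros] at hx
    simp only [← Polynomial.map_evalRingHom_eval]
    exact (Nat.sub_le_sub_left Polynomial.natDegree_map_le _).trans
      (card_units_sub_natDegree_le_hammingNorm_eval hx)
  calc (Fintype.card Rˣ - (verticalZeros f).card) * (Fintype.card Rˣ - f.natDegree)
      = (verticalZeros f)ᶜ.card • (Fintype.card Rˣ - f.natDegree) := by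
        rw [Finset.card_compl, smul_eq_mul]
    _ ≤ ∑ x ∈ (verticalZeros f)ᶜ, hammingNorm fun y : Rˣ => f.evalEval (x : R) (y : R) :=
        Finset.card_nsmul_le_sum _ _ _ line_weight
    _ ≤ ∑ x : Rˣ, hammingNorm fun y : Rˣ => f.evalEval (x : R) (y : R) :=
        Finset.sum_le_sum_of_subset (Finset.subset_univ _)
    _ = hammingNorm fun t : Rˣ × Rˣ => f.evalEval (t.1 : R) (t.2 : R) :=
        (hammingNorm_prod fun t : Rˣ × Rˣ => f.evalEval (t.1 : R) (t.2 : R)).symm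

lemma SupportedIn.exists_mul_le_hammingNorm [DecidableEq R] {f : R[X][Y]} {d : ℕ} {h : ℕ → ℕ}
    (hh : Monotone h) (hf : SupportedIn f (underGraph d h)) (hf0 : f ≠ 0) :
    ∃ k ≤ d, (Fintype.card Rˣ - (d - k)) * (Fintype.card Rˣ - h k) ≤
      hammingNorm fun t : Rˣ × Rˣ => f.evalEval (t.1 : R) (t.2 : R) := by
  refine ⟨d - (verticalZeros f).card, Nat.sub_le _ _, ?_⟩
  rw [Nat.sub_sub_self (card_verticalZeros_le hf0 hf.natDegree_coeff_le)]
  exact (Nat.mul_le_mul_left _ (Nat.sub_le_sub_left (hf.natDegree_le hh) _)).trans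
    (mul_le_hammingNorm_evalEval f)

end BivariateEvaluation

section ToricCode

variable {F : Type*} [Field F]

variable (F) in
/-- The monomial `x ^ u.1 * y ^ u.2` as a character of the torus `(Fˣ)²`. -/
def torusCharacter (u : ℕ × ℕ) : Fˣ × Fˣ →* F :=
  (Units.coeHom F).comp (MonoidHom.fst Fˣ Fˣ) ^ u.1 *
    (Units.coeHom F).comp (MonoidHom.snd Fˣ Fˣ) ^ u.2

lemma torusCharacter_apply (u : ℕ × ℕ) (t : Fˣ × Fˣ) :
    torusCharacter F u t = (t.1 : F) ^ u.1 * (t.2 : F) ^ u.2 := rfl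

lemma toricCode_eq_span (U : Set (ℕ × ℕ)) :
    toricCode F U = Submodule.span F ((fun u => ⇑(torusCharacter F u)) '' U) := by
  have torusEval_monomial (u : ℕ × ℕ) :
      torusEval F (X 0 ^ u.1 * X 1 ^ u.2) = torusCharacter F u := by
    ext t
    simp [torusEval, torusCharacter_apply]
  have monomials_eq : {m : MvPolynomial (Fin 2) F | ∃ u ∈ U, m = X 0 ^ u.1 * X 1 ^ u.2} =
      (fun u => X 0 ^ u.1 * X 1 ^ u.2) '' U := by
    ext m
    simp [eq_comm]
  simp only [toricCode, monomials_eq, Submodule.map_span, Set.image_image, torusEval_monomial]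

lemma exists_supportedIn_of_mem_toricCode {U : Set (ℕ × ℕ)} {c : Fˣ × Fˣ → F}
    (hc : c ∈ toricCode F U) :
    ∃ f : F[X][Y], SupportedIn f U ∧ c = fun t => f.evalEval (t.1 : F) (t.2 : F) := by
  rw [toricCode_eq_span] at hc
  induction hc using Submodule.span_induction with
  | mem c hc =>
    obtain ⟨u, hu, rfl⟩ := hc
    refine ⟨Polynomial.monomial u.2 (Polynomial.monomial u.1 1), .monomial hu 1, ?_⟩
    ext t
    simp [Polynomial.evalEval, torusCharacter_apply]
  | zero => exact ⟨0, .zero U, by ext; simp⟩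
  | add c c' _ _ hc hc' =>
    obtain ⟨f, hf, rfl⟩ := hc
    obtain ⟨g, hg, rfl⟩ := hc'
    exact ⟨f + g, hf.add hg, by ext; simp⟩
  | smul a c _ hc =>
    obtain ⟨f, hf, rfl⟩ := hc
    exact ⟨a • f, hf.smul a, by ext; simp⟩

lemma SupportedIn.evalEval_mem_toricCode {U : Set (ℕ × ℕ)} {f : F[X][Y]} (hf : SupportedIn f U) :
    (fun t : Fˣ × Fˣ => f.evalEval (t.1 : F) (t.2 : F)) ∈ toricCode F U := by
  have eval_eq_sum : (fun t : Fˣ × Fˣ => f.evalEval (t.1 : F) (t.2 : F)) =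
      ∑ j ∈ f.support, ∑ i ∈ (f.coeff j).support,
        (f.coeff j).coeff i • ⇑(torusCharacter F (i, j)) := by
    ext t
    simp [Polynomial.evalEval, Polynomial.eval_eq_sum (p := f), Polynomial.sum,
      Polynomial.eval_finsetSum, Polynomial.eval_eq_sum (x := (t.1 : F)) (p := f.coeff _),
      torusCharacter_apply, Finset.sum_mul, mul_assoc]
  rw [toricCode_eq_span, eval_eq_sum]
  exact Submodule.sum_mem _ fun j _ => Submodule.sum_mem _ fun i hi => Submodule.smul_mem _ _
    (Submodule.subset_span ⟨_, hf i j (Polynomial.mem_support_iff.1 hi), rfl⟩)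

lemma injOn_torusCharacter [Finite F] :
    Set.InjOn (torusCharacter F) {u | u.1 < Nat.card Fˣ ∧ u.2 < Nat.card Fˣ} := by
  obtain ⟨g, hg⟩ := IsCyclic.exists_ofOrder_eq_natCard (α := Fˣ)
  have pow_injective {m n : ℕ} (hm : m < Nat.card Fˣ) (hn : n < Nat.card Fˣ)
      (hmn : (g : F) ^ m = (g : F) ^ n) : m = n :=
    pow_injOn_Iio_orderOf (hg ▸ hm) (hg ▸ hn) (Units.ext (by simpa using hmn))
  rintro u ⟨hu₁, hu₂⟩ v ⟨hv₁, hv₂⟩ huv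
  refine Prod.ext (pow_injective hu₁ hv₁ ?_) (pow_injective hu₂ hv₂ ?_)
  · simpa [torusCharacter_apply] using DFunLike.congr_fun huv (g, 1)
  · simpa [torusCharacter_apply] using DFunLike.congr_fun huv (1, g)

lemma finrank_toricCode [Finite F] {U : Finset (ℕ × ℕ)}
    (hU : ∀ u ∈ U, u.1 < Nat.card Fˣ ∧ u.2 < Nat.card Fˣ) :
    Module.finrank F (toricCode F U) = U.card := by
  have linearIndependent_characters :
      LinearIndependent F fun u : U => ⇑(torusCharacter F u) :=
    (linearIndependent_monoidHom (Fˣ × Fˣ) F).comp (fun u : U => torusCharacter F u)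
      (injOn_torusCharacter.mono hU).injective
  rw [toricCode_eq_span, Set.image_eq_range]
  exact (finrank_span_eq_card linearIndependent_characters).trans (Fintype.card_coe U)

variable [Fintype Fˣ] [DecidableEq F] {d : ℕ} {h : ℕ → ℕ}

lemma exists_mem_toricCode_hammingNorm_eq (hh : Monotone h) {k : ℕ} (hk : k ≤ d)
    (hd : d ≤ Fintype.card Fˣ) (hhk : h k ≤ Fintype.card Fˣ) :
    ∃ c ∈ toricCode F (underGraph d h),
      hammingNorm c = (Fintype.card Fˣ - (d - k)) * (Fintype.card Fˣ - h k) := by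
  obtain ⟨p, hp, hpw⟩ := exists_natDegree_eq_hammingNorm_eval_eq (R := F)
    ((Nat.sub_le d k).trans hd)
  obtain ⟨q, hq, hqw⟩ := exists_natDegree_eq_hammingNorm_eval_eq (R := F) hhk
  have supported : SupportedIn (Polynomial.C (Polynomial.X ^ k * p) * q.map Polynomial.C)
      (underGraph d h) := by
    intro i j hij
    rw [Polynomial.coeff_C_mul, Polynomial.coeff_map, Polynomial.coeff_mul_C,
      Polynomial.coeff_X_pow_mul', mul_ne_zero_iff, ite_ne_right_iff] at hij
    obtain ⟨⟨hki, hpi⟩, hqj⟩ := hij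
    have hi := Polynomial.le_natDegree_of_ne_zero hpi
    have hj := Polynomial.le_natDegree_of_ne_zero hqj
    rw [Finset.mem_coe, mem_underGraph]
    exact ⟨by omega, (hj.trans_eq hq).trans (hh hki)⟩
  refine ⟨_, supported.evalEval_mem_toricCode, ?_⟩
  simp only [Polynomial.evalEval_mul, Polynomial.evalEval_C, Polynomial.evalEval_map_C]
  refine (hammingNorm_mul_prod (fun x : Fˣ => (Polynomial.X ^ k * p).eval (x : F))
    fun y : Fˣ => q.eval (y : F)).trans ?_
  rw [hqw, ← hpw]
  simp [hammingNorm]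

theorem isLeast_hammingNorm_toricCode_underGraph (hh : Monotone h) (hd : d < Fintype.card Fˣ)
    (hhd : h d < Fintype.card Fˣ) {m : ℕ}
    (hm : IsLeast ((fun k => (Fintype.card Fˣ - (d - k)) * (Fintype.card Fˣ - h k)) '' Set.Iic d)
      m) :
    IsLeast {w | ∃ c ∈ toricCode F (underGraph d h), c ≠ 0 ∧ hammingNorm c = w} m := by
  obtain ⟨⟨k, hk, rfl⟩, hmin⟩ := hm
  refine ⟨?_, ?_⟩
  · have hhk : h k < Fintype.card Fˣ := (hh hk).trans_lt hhd
    obtain ⟨c, hc, hcw⟩ := exists_mem_toricCode_hammingNorm_eq hh hk hd.le hhk.le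
    have weight_pos : 0 < hammingNorm c := hcw ▸ Nat.mul_pos (by omega) (by omega)
    exact ⟨c, hc, hammingNorm_pos_iff.1 weight_pos, hcw⟩
  · rintro _ ⟨c, hc, hc0, rfl⟩
    obtain ⟨f, hf, rfl⟩ := exists_supportedIn_of_mem_toricCode hc
    have hf0 : f ≠ 0 := by
      rintro rfl
      exact hc0 (by ext; simp)
    obtain ⟨l, hl, hle⟩ := hf.exists_mul_le_hammingNorm hh hf0
    exact (hmin ⟨l, hl, rfl⟩).trans hle

end ToricCode

section AffineHeight

lemma min_mul_le_add_mul_add {R : Type*} [CommSemiring R] [LinearOrder R] [IsOrderedRing R]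
    {r k l : R} (hr : 0 ≤ r) (hk : 0 ≤ k) (hl : 0 ≤ l) (a b : R) :
    min (a * (b + r * (k + l))) ((a + (k + l)) * b) ≤ (a + k) * (b + r * l) := by
  have product_nonneg : 0 ≤ r * k * l := by positivity
  rcases le_total (r * a) b with hab | hab
  · calc min (a * (b + r * (k + l))) ((a + (k + l)) * b)
        ≤ a * (b + r * (k + l)) := min_le_left _ _
      _ = a * b + r * a * l + k * (r * a) := by ring
      _ ≤ a * b + r * a * l + k * b + r * k * l := by
        refine le_add_of_le_of_nonneg ?_ product_nonneg
        gcongr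
      _ = (a + k) * (b + r * l) := by ring
  · calc min (a * (b + r * (k + l))) ((a + (k + l)) * b)
        ≤ (a + (k + l)) * b := min_le_right _ _
      _ = a * b + k * b + l * b := by ring
      _ ≤ a * b + k * b + l * (r * a) + r * k * l := by
        refine le_add_of_le_of_nonneg ?_ product_nonneg
        gcongr
      _ = (a + k) * (b + r * l) := by ring

lemma isLeast_image_mul_sub_affine {N d e r : ℕ} (hd : d ≤ N) (herd : e + r * d ≤ N) :
    IsLeast ((fun k => (N - (d - k)) * (N - (e + r * k))) '' Set.Iic d)
      (min ((N - d) * (N - e)) (N * (N - e - r * d))) := by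
  constructor
  · rcases min_choice ((N - d) * (N - e)) (N * (N - e - r * d)) with hmin | hmin <;> rw [hmin]
    · exact ⟨0, by simp, by simp⟩
    · exact ⟨d, by simp, by simp [Nat.sub_sub]⟩
  · rintro _ ⟨k, hk, rfl⟩
    obtain ⟨l, rfl⟩ := Nat.exists_eq_add_of_le (Set.mem_Iic.1 hk)
    obtain ⟨a, ha⟩ := Nat.exists_eq_add_of_le hd
    obtain ⟨b, hb⟩ := Nat.exists_eq_add_of_le herd
    have hrkl : r * (k + l) = r * k + r * l := mul_add r k l
    have hNd : N - (k + l) = a := by omega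
    have hNe : N - e = b + r * (k + l) := by omega
    have hNerd : N - e - r * (k + l) = b := by omega
    have hNk : N - (k + l - k) = a + k := by omega
    have hNh : N - (e + r * k) = b + r * l := by omega
    have hN : N = a + (k + l) := by omega
    simp only [hNd, hNerd, hNk, hNh]
    rw [hNe, hN]
    exact min_mul_le_add_mul_add r.zero_le k.zero_le l.zero_le a b

end AffineHeight

/-- The Hirzebruch toric code has length `(q−1)²`, dimension
`(d+1)(e+1)+r·d(d+1)/2` and minimum distance exactly
`min{(q−1−d)(q−1−e), (q−1)(q−1−e−rd)}`. -/
theorem hirzebruch_code_parameters (F : Type*) [Field F] [Fintype F] [DecidableEq F]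
    (d e r : ℕ) (hd : 0 < d) (he : 0 < e) (hr : 0 < r)
    (hdq : d < Fintype.card F - 1) (heq : e < Fintype.card F - 1)
    (herd : e + r * d < Fintype.card F - 1) :
    Fintype.card (Fˣ × Fˣ) = (Fintype.card F - 1) ^ 2 ∧
    Module.finrank F (toricCode F (hirzU d e r)) =
      (d + 1) * (e + 1) + r * (d * (d + 1)) / 2 ∧
    IsLeast {w : ℕ | ∃ c ∈ toricCode F (hirzU d e r), c ≠ 0 ∧ hammingNorm c = w}
      (min ((Fintype.card F - 1 - d) * (Fintype.card F - 1 - e))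
        ((Fintype.card F - 1) * (Fintype.card F - 1 - e - r * d))) := by
  rw [← Fintype.card_units F] at hdq herd ⊢
  have height_monotone : Monotone fun i => e + r * i := fun _ _ hij =>
    Nat.add_le_add_left (Nat.mul_le_mul_left r hij) e
  rw [hirzU_eq_underGraph]
  refine ⟨by rw [Fintype.card_prod, sq], ?_, ?_⟩
  · rw [← card_underGraph_affine]
    refine finrank_toricCode fun u hu => ?_
    obtain ⟨hu₁, hu₂⟩ := mem_underGraph.1 hu
    rw [Nat.card_eq_fintype_card]
    exact ⟨hu₁.trans_lt hdq, (hu₂.trans (height_monotone hu₁)).trans_lt herd⟩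
  · exact isLeast_hammingNorm_toricCode_underGraph height_monotone hdq herd
      (isLeast_image_mul_sub_affine hdq.le herd.le)
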